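/- Let A₁, …, A_m ⊂ ℝⁿ be symmetric convex Borel sets. Then γ_n(⋂_{j=1}^m A_j) ≥ ∏_{j=1}^m γ_n(A_j), where γ_n is the standard Gaussian measure. -/

import Mathlib

open MeasureTheory Real Set

/-- The standard Gaussian measure on `ℝⁿ`. -/
noncomputable def stdGaussian (n : ℕ) : Measure (EuclideanSpace ℝ (Fin n)) :=
  volume.withDensity fun x => ENNReal.ofReal ((2 * π) ^ (-(n : ℝ) / 2) * Real.exp (-‖x‖ ^ 2 / 2))

namespace GCI
open Matrix

lemma exists_sqrt {ι : Type*} [Fintype ι] [DecidableEq ι] {M : Matrix ι ι ℝ} (hM : M.PosDef) :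
    ∃ B : Matrix ι ι ℝ, IsUnit B ∧ M = Bᵀ * B := by
  have h := hM.1.spectral_theorem
  rw [Unitary.conjStarAlgAut_apply] at h
  set Q := hM.1.eigenvectorUnitary
  set e := hM.1.eigenvalues
  have he : ∀ i, 0 < e i := hM.eigenvalues_pos
  have hM' : M = (diagonal (fun i => √(e i)) * (star Q : Matrix ι ι ℝ))ᵀ *
      (diagonal (fun i => √(e i)) * (star Q : Matrix ι ι ℝ)) := by
    conv_lhs => rw [h]
    have : diagonal (RCLike.ofReal ∘ e : ι → ℝ) = diagonal (fun i => √(e i)) * diagonal (fun i => √(e i)) := by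
      rw [diagonal_mul_diagonal]
      congr 1; ext i
      simp [Real.mul_self_sqrt (he i).le]
    rw [this, transpose_mul, diagonal_transpose]
    simp only [mul_assoc]
    congr 1
  refine ⟨_, ?_, hM'⟩
  rw [Matrix.isUnit_iff_isUnit_det, isUnit_iff_ne_zero]
  intro h0
  have := hM.det_pos
  rw [hM', det_mul, h0] at this
  simp at this

lemma det_one_add_smul {ι : Type*} [Fintype ι] [DecidableEq ι] {K : Matrix ι ι ℝ} (hK : K.IsHermitian)
    (t : ℝ) : (1 + t • K).det = ∏ i, (1 + t * hK.eigenvalues i) := by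
  have h := hK.spectral_theorem
  rw [Unitary.conjStarAlgAut_apply] at h
  set Q := hK.eigenvectorUnitary
  set e := hK.eigenvalues
  have hQ : (Q : Matrix ι ι ℝ) * (star Q : Matrix ι ι ℝ) = 1 := Unitary.mul_star_self_of_mem Q.2
  have : 1 + t • K = (Q : Matrix ι ι ℝ) * (diagonal (fun i => 1 + t * e i)) * (star Q : Matrix ι ι ℝ) := by
    have h2 : diagonal (fun i => 1 + t * e i) = 1 + t • diagonal (RCLike.ofReal ∘ e : ι → ℝ) := by
      ext i j
      by_cases hij : i = j <;> simp [hij]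
    rw [h2, mul_add, add_mul, mul_one, hQ, mul_smul_comm, smul_mul_assoc, ← h]
  rw [this, det_mul_right_comm, hQ, one_mul, det_diagonal]

lemma eig_abs_le {ι : Type*} [Fintype ι] [DecidableEq ι] {K : Matrix ι ι ℝ} (hK : K.IsHermitian)
    (h1 : (1 + K).PosSemidef) (h2 : (1 - K).PosSemidef) (i : ι) : |hK.eigenvalues i| ≤ 1 := by
  have e := hK.mulVec_eigenvectorBasis i
  set x : ι → ℝ := ⇑(hK.eigenvectorBasis i) with hx
  have hxx : 0 < star x ⬝ᵥ x := by
    have h0 : x ≠ 0 := by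
      intro h0
      have := (hK.eigenvectorBasis.orthonormal.ne_zero i)
      apply this
      ext j
      exact congrFun h0 j
    have := Matrix.dotProduct_star_self_pos_iff (v := x)
    rw [dotProduct_comm]
    exact this.2 h0
  have a1 := h1.dotProduct_mulVec_nonneg x
  have a2 := h2.dotProduct_mulVec_nonneg x
  rw [add_mulVec, one_mulVec, e, dotProduct_add, dotProduct_smul, smul_eq_mul] at a1
  rw [sub_mulVec, one_mulVec, e, dotProduct_sub, dotProduct_smul, smul_eq_mul] at a2
  rw [abs_le]
  constructor <;> nlinarith

lemma det_antitone_aux {ι : Type*} [Fintype ι] [DecidableEq ι] {K : Matrix ι ι ℝ}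
    (hK : K.IsHermitian) (h1 : (1 + K).PosSemidef) (h2 : (1 - K).PosSemidef)
    (hdet : ∀ t : ℝ, (1 + t • K).det = (1 + (-t) • K).det) :
    AntitoneOn (fun t : ℝ => (1 + t • K).det) (Icc 0 1) := by
  intro s hs t ht hst
  have hν := eig_abs_le hK h1 h2
  have hnn : ∀ t ∈ Icc (0:ℝ) 1, ∀ i, 0 ≤ 1 + t * hK.eigenvalues i := by
    intro t ht i
    have := abs_le.1 (hν i)
    nlinarith [ht.1, ht.2]
  have hsq : ∀ t : ℝ, (1 + t • K).det ^ 2 = ∏ i, (1 - t ^ 2 * hK.eigenvalues i ^ 2) := by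
    intro t
    rw [sq]
    nth_rw 2 [hdet]
    rw [det_one_add_smul hK, det_one_add_smul hK, ← Finset.prod_mul_distrib]
    exact Finset.prod_congr rfl fun i _ => by ring
  have h0 : 0 ≤ (1 + s • K).det := by
    rw [det_one_add_smul hK]
    exact Finset.prod_nonneg fun i _ => hnn s hs i
  refine le_of_sq_le_sq ?_ h0
  rw [hsq, hsq]
  refine Finset.prod_le_prod (fun i _ => ?_) (fun i _ => ?_)
  · have := abs_le.1 (hν i)
    have h3 : t ^ 2 ≤ 1 := by nlinarith [ht.1, ht.2]
    have h4 : hK.eigenvalues i ^ 2 ≤ 1 := by nlinarith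
    nlinarith [sq_nonneg t, sq_nonneg (hK.eigenvalues i)]
  · have : s ^ 2 ≤ t ^ 2 := by nlinarith [hs.1]
    nlinarith [sq_nonneg (hK.eigenvalues i)]

lemma det_antitone_posDef {ι : Type*} [Fintype ι] [DecidableEq ι] {D K U : Matrix ι ι ℝ}
    (hD : D.PosDef) (h1 : (D + K).PosSemidef) (h2 : (D - K).PosSemidef)
    (hU : U * U = 1) (hUD : U * D * U = D) (hUK : U * K * U = -K) :
    AntitoneOn (fun t : ℝ => (D + t • K).det) (Icc 0 1) := by
  obtain ⟨B, hB, rfl⟩ := exists_sqrt hD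
  have hBd := (Matrix.isUnit_iff_isUnit_det _).1 hB
  have hBd' : IsUnit (Bᵀ).det := by rwa [det_transpose]
  set K' := (Bᵀ)⁻¹ * K * B⁻¹ with hK'
  have hKK : K = Bᵀ * K' * B := by
    rw [hK', ← mul_assoc, ← mul_assoc, mul_nonsing_inv _ hBd', one_mul, mul_assoc,
      nonsing_inv_mul _ hBd, mul_one]
  have hc : ∀ M : Matrix ι ι ℝ, (Bᵀ * M * B).PosSemidef → M.PosSemidef := by
    intro M hM
    exact (IsUnit.posSemidef_star_left_conjugate_iff hB).1 hM
  have h1' : (1 + K').PosSemidef := by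
    apply hc
    rw [mul_add, add_mul, mul_one, ← hKK]; exact h1
  have h2' : (1 - K').PosSemidef := by
    apply hc
    rw [mul_sub, sub_mul, mul_one, ← hKK]; exact h2
  have hH : K'.IsHermitian := by
    have := h1'.1.sub (Matrix.isHermitian_one (n := ι) (α := ℝ))
    simpa using this
  have key : ∀ t : ℝ, (Bᵀ * B + t • K).det = (Bᵀ * B).det * (1 + t • K').det := by
    intro t
    have : Bᵀ * B + t • K = Bᵀ * (1 + t • K') * B := by
      rw [mul_add, add_mul, mul_one, mul_smul_comm, smul_mul_assoc, ← hKK]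
    rw [this, det_mul, det_mul, det_mul]; ring
  have hUd : U.det * U.det = 1 := by rw [← det_mul, hU, det_one]
  have hs : ∀ t : ℝ, (Bᵀ * B + t • K).det = (Bᵀ * B + (-t) • K).det := by
    intro t
    have : Bᵀ * B + (-t) • K = U * (Bᵀ * B + t • K) * U := by
      rw [mul_add, add_mul, hUD, mul_smul_comm, smul_mul_assoc, hUK]; simp
    rw [this, det_mul, det_mul]
    linear_combination -(Bᵀ * B + t • K).det * hUd
  have hpos := hD.det_pos
  have anti := det_antitone_aux hH h1' h2' (fun t => by
    have := hs t
    rw [key, key] at this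
    exact mul_left_cancel₀ hpos.ne' this)
  intro s hs t ht hst
  simp only [key]
  exact mul_le_mul_of_nonneg_left (anti hs ht hst) hpos.le

lemma det_antitone {ι : Type*} [Fintype ι] [DecidableEq ι] {D K U : Matrix ι ι ℝ}
    (hD : D.PosSemidef) (h1 : (D + K).PosSemidef) (h2 : (D - K).PosSemidef)
    (hU : U * U = 1) (hUD : U * D * U = D) (hUK : U * K * U = -K) :
    AntitoneOn (fun t : ℝ => (D + t • K).det) (Icc 0 1) := by
  intro s hs t ht hst
  have hlim : ∀ t : ℝ, Filter.Tendsto (fun ε : ℝ => (D + ε • (1 : Matrix ι ι ℝ) + t • K).det)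
      (nhdsWithin 0 (Ioi 0)) (nhds (D + t • K).det) := by
    intro t
    have : Continuous (fun ε : ℝ => (D + ε • (1 : Matrix ι ι ℝ) + t • K).det) := by fun_prop
    have := (this.tendsto 0).mono_left (nhdsWithin_le_nhds (s := Ioi 0))
    simpa using this
  refine le_of_tendsto_of_tendsto (hlim t) (hlim s) ?_
  filter_upwards [self_mem_nhdsWithin] with ε hε
  have hε1 : (ε • (1 : Matrix ι ι ℝ)).PosDef := Matrix.PosDef.one.smul hε
  refine det_antitone_posDef (U := U) (D := D + ε • (1 : Matrix ι ι ℝ)) ?_ ?_ ?_ hU ?_ hUK hs ht hst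
  · exact hε1.posSemidef_add hD
  · have := h1.add hε1.posSemidef
    rwa [add_right_comm] at this
  · have := h2.add hε1.posSemidef
    rwa [sub_add_eq_add_sub] at this
  · rw [mul_add, add_mul, hUD, mul_smul_comm, smul_mul_assoc, mul_one, hU]

/-- Expansion of `det (1 + Λ C)`. -/
lemma det_expand {ι : Type*} [Fintype ι] [DecidableEq ι] (C : Matrix ι ι ℝ) (l : ι → ℝ) :
    (1 + diagonal l * C).det = ∑ J : Finset ι, (∏ i ∈ J, l i) *
      (diagonal (fun i => if i ∈ J then (1:ℝ) else 0) * C *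
        diagonal (fun i => if i ∈ J then (1:ℝ) else 0) +
        diagonal (fun i => if i ∈ J then (0:ℝ) else 1)).det := by
  have h := (Matrix.detRowAlternating (n := ι) (R := ℝ)).toMultilinearMap.map_add_univ
    (fun i => l i • C i) (fun i => (1 : Matrix ι ι ℝ) i)
  have e1 : (1 + diagonal l * C) = (fun i => l i • C i) + (fun i => (1 : Matrix ι ι ℝ) i) := by
    ext i j
    simp [diagonal_mul, add_comm]
  have : (1 + diagonal l * C).det = _ := (congrArg _ e1).trans h
  rw [this]
  refine Finset.sum_congr rfl fun J _ => ?_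
  set P : Matrix ι ι ℝ := diagonal (fun i => if i ∈ J then (1:ℝ) else 0) with hP
  set R : Matrix ι ι ℝ := diagonal (fun i => if i ∈ J then (0:ℝ) else 1) with hR
  have hPR : R * P = 0 := by
    rw [hP, hR, diagonal_mul_diagonal, ← diagonal_zero]; congr 1; ext i; split_ifs <;> simp
  have hRR : R * R = R := by
    rw [hR, diagonal_mul_diagonal]; congr 1; ext i; split_ifs <;> simp
  have hPaddR : P + R = 1 := by
    rw [hP, hR, diagonal_add, ← diagonal_one]; congr 1; ext i; split_ifs <;> simp
  have hd1 : (1 + P * C * R).det = 1 := by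
    have := det_one_add_mul_comm (P * C) R
    rw [this, ← mul_assoc, hPR, zero_mul, add_zero, det_one]
  have hfac : P * C + R = (1 + P * C * R) * (P * C * P + R) := by
    calc P * C + R = P * C * (P + R) + R := by rw [hPaddR, mul_one]
      _ = P * C * P + R + (P * C * (R * P) * C * P + P * C * (R * R)) := by
        rw [hPR, hRR]; simp [mul_add]; abel
      _ = _ := by noncomm_ring
  have hD : (P * C * P + R).det = (P * C + R).det := by rw [hfac, det_mul, hd1, one_mul]
  rw [hD]
  have hrow : (J.piecewise (fun i => l i • C i) (fun i => (1 : Matrix ι ι ℝ) i)) =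
      (fun i => (if i ∈ J then l i else 1) • (P * C + R : Matrix ι ι ℝ) i) := by
    ext i j
    by_cases hi : i ∈ J <;> simp [hi, hP, hR, diagonal_mul, Matrix.diagonal_apply, Matrix.one_apply]
  rw [hrow]
  have := (Matrix.detRowAlternating (n := ι) (R := ℝ)).toMultilinearMap.map_smul_univ
    (fun i => if i ∈ J then l i else 1) (P * C + R)
  refine this.trans ?_
  rw [smul_eq_mul, Finset.prod_ite_mem, Finset.univ_inter]
  rfl

end GCI

namespace GCI
open Matrix

/-- Standard Gaussian measure on `κ → ℝ`. -/
noncomputable def gam (κ : Type*) [Fintype κ] : Measure (κ → ℝ) :=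
  Measure.pi (fun _ => ProbabilityTheory.gaussianReal 0 1)

instance (κ : Type*) [Fintype κ] : IsProbabilityMeasure (gam κ) := by
  unfold gam; infer_instance

/-- Gaussian density. -/
noncomputable def dens {κ : Type*} [Fintype κ] (x : κ → ℝ) : ℝ :=
  (√(2 * π))⁻¹ ^ (Fintype.card κ) * exp (-(x ⬝ᵥ x) / 2)

lemma dens_eq_prod {κ : Type*} [Fintype κ] (x : κ → ℝ) :
    dens x = ∏ i, ProbabilityTheory.gaussianPDFReal 0 1 (x i) := by
  simp only [ProbabilityTheory.gaussianPDFReal, Finset.prod_mul_distrib, dens, ← Real.exp_sum]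
  simp [dotProduct, ← Finset.sum_div, sq]

lemma dens_nonneg {κ : Type*} [Fintype κ] (x : κ → ℝ) : 0 ≤ dens x := by
  unfold dens; positivity

lemma dens_measurable {κ : Type*} [Fintype κ] : Measurable (dens (κ := κ)) := by
  unfold dens dotProduct; fun_prop

lemma dens_integrable {κ : Type*} [Fintype κ] : Integrable (dens (κ := κ)) := by
  have : dens (κ := κ) = fun x => ∏ i, ProbabilityTheory.gaussianPDFReal 0 1 (x i) := by
    ext x; exact dens_eq_prod x
  rw [this]
  exact Integrable.fintype_prod (fun i => ProbabilityTheory.integrable_gaussianPDFReal 0 1)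

lemma gam_eq {κ : Type*} [Fintype κ] :
    gam κ = volume.withDensity (fun x => ENNReal.ofReal (dens x)) := by
  refine Measure.pi_eq fun s hs => ?_
  rw [withDensity_apply _ (MeasurableSet.univ_pi hs), ← ofReal_integral_eq_lintegral_ofReal
    dens_integrable.integrableOn (Filter.Eventually.of_forall dens_nonneg)]
  simp only [ProbabilityTheory.gaussianReal_apply_eq_integral 0 (one_ne_zero)]
  rw [volume_pi, Measure.restrict_pi_pi]
  simp only [dens_eq_prod]
  rw [integral_fintype_prod_eq_prod, ENNReal.ofReal_prod_of_nonneg]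
  intro i _
  exact integral_nonneg fun x => ProbabilityTheory.gaussianPDFReal_nonneg 0 1 x

lemma integral_gam {κ : Type*} [Fintype κ] (f : (κ → ℝ) → ℝ) :
    ∫ x, f x ∂(gam κ) = ∫ x, dens x * f x := by
  rw [gam_eq, integral_withDensity_eq_integral_toReal_smul]
  · simp [ENNReal.toReal_ofReal (dens_nonneg _)]
  · exact dens_measurable.ennreal_ofReal
  · exact Filter.Eventually.of_forall fun x => ENNReal.ofReal_lt_top

lemma integral_dens {κ : Type*} [Fintype κ] : ∫ x : κ → ℝ, dens x = 1 := by
  have := integral_gam (κ := κ) (fun _ => 1)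
  simpa using this.symm

lemma posDef_aux {ι κ : Type*} [Fintype ι] [Fintype κ] [DecidableEq ι] [DecidableEq κ]
    (V : Matrix ι κ ℝ) (l : ι → ℝ) (hl : ∀ i, 0 ≤ l i) :
    (1 + Vᵀ * (diagonal l * V)).PosDef := by
  refine Matrix.PosDef.one.add_posSemidef ?_
  have h := (Matrix.PosSemidef.diagonal (n := ι) (d := l) hl).conjTranspose_mul_mul_same V
  rw [Matrix.mul_assoc] at h
  exact h

lemma det_aux {ι κ : Type*} [Fintype ι] [Fintype κ] [DecidableEq ι] [DecidableEq κ]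
    (V : Matrix ι κ ℝ) (l : ι → ℝ) :
    (1 + Vᵀ * (diagonal l * V)).det = (1 + diagonal l * (V * Vᵀ)).det := by
  rw [det_one_add_mul_comm, Matrix.mul_assoc]

lemma gauss_int {ι κ : Type*} [Fintype ι] [Fintype κ] [DecidableEq ι] [DecidableEq κ]
    (V : Matrix ι κ ℝ) (l : ι → ℝ) (hl : ∀ i, 0 ≤ l i) :
    ∫ x, exp (-(∑ i, l i * (V *ᵥ x) i ^ 2) / 2) ∂(gam κ) =
      (√(1 + diagonal l * (V * Vᵀ)).det)⁻¹ := by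
  have hM := posDef_aux V l hl
  rw [← det_aux]
  set M := 1 + Vᵀ * (diagonal l * V) with hMdef
  obtain ⟨B, hB, hMB⟩ := exists_sqrt hM
  have hBd : B.det ≠ 0 := ((Matrix.isUnit_iff_isUnit_det _).1 hB).ne_zero
  have hdet : √M.det = |B.det| := by
    rw [hMB, det_mul, det_transpose, ← sq, Real.sqrt_sq_eq_abs]
  rw [hdet, integral_gam]
  have hfun : ∀ x : κ → ℝ, dens x * exp (-(∑ i, l i * (V *ᵥ x) i ^ 2) / 2) = dens (toLin' B x) := by
    intro x
    have h1 : (B *ᵥ x) ⬝ᵥ (B *ᵥ x) = x ⬝ᵥ x + ∑ i, l i * (V *ᵥ x) i ^ 2 := by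
      have e1 : (B *ᵥ x) ⬝ᵥ (B *ᵥ x) = x ⬝ᵥ (M *ᵥ x) := by
        rw [hMB, ← mulVec_mulVec, dotProduct_mulVec x, vecMul_transpose]
      rw [e1, hMdef, add_mulVec, one_mulVec, dotProduct_add, ← mulVec_mulVec, dotProduct_mulVec x,
        vecMul_transpose, ← mulVec_mulVec]
      congr 1
      simp only [dotProduct, mulVec_diagonal]
      exact Finset.sum_congr rfl fun i _ => by ring
    rw [dens, dens, mul_assoc, ← exp_add, toLin'_apply, h1]
    congr 2; ring
  simp only [hfun]
  have hmap := Real.map_matrix_volume_pi_eq_smul_volume_pi hBd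
  have hmeas : Measurable (toLin' B) := (LinearMap.continuous_of_finiteDimensional _).measurable
  rw [← integral_map (f := dens) hmeas.aemeasurable dens_measurable.aestronglyMeasurable, hmap,
    integral_smul_measure, integral_dens]
  simp [abs_inv]

end GCI

namespace GCI
open Matrix

lemma minor_antitone {ι : Type*} [Fintype ι] [DecidableEq ι] {D K : Matrix ι ι ℝ} {σ : ι → ℝ}
    (hσ : ∀ i, σ i * σ i = 1)
    (hD : D.PosSemidef) (h1 : (D + K).PosSemidef) (h2 : (D - K).PosSemidef)
    (hUD : ∀ i j, σ i * D i j * σ j = D i j) (hUK : ∀ i j, σ i * K i j * σ j = - K i j)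
    (J : Finset ι) :
    AntitoneOn (fun t : ℝ => (diagonal (fun i => if i ∈ J then (1:ℝ) else 0) * (D + t • K) *
        diagonal (fun i => if i ∈ J then (1:ℝ) else 0) +
        diagonal (fun i => if i ∈ J then (0:ℝ) else 1)).det) (Icc 0 1) := by
  set P : Matrix ι ι ℝ := diagonal (fun i => if i ∈ J then (1:ℝ) else 0) with hP
  set R : Matrix ι ι ℝ := diagonal (fun i => if i ∈ J then (0:ℝ) else 1) with hR
  have hRp : R.PosSemidef := Matrix.PosSemidef.diagonal (fun i => by simp only [Pi.zero_apply]; split_ifs <;> simp)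
  have hPt : Pᴴ = P := by
    rw [hP, diagonal_conjTranspose]; congr 1
  have conj : ∀ M : Matrix ι ι ℝ, M.PosSemidef → (P * M * P + R).PosSemidef := by
    intro M hM
    have := hM.conjTranspose_mul_mul_same P
    rw [hPt] at this
    exact this.add hRp
  have e : ∀ t : ℝ, P * (D + t • K) * P + R = (P * D * P + R) + t • (P * K * P) := by
    intro t
    rw [mul_add, add_mul, mul_smul_comm, smul_mul_assoc]; abel
  simp only [e]
  refine det_antitone (U := diagonal σ) (conj D hD) ?_ ?_ ?_ ?_ ?_
  · have := conj _ h1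
    rw [mul_add, add_mul] at this
    convert this using 1; abel
  · have := conj _ h2
    rw [mul_sub, sub_mul] at this
    convert this using 1; abel
  · rw [diagonal_mul_diagonal, ← diagonal_one]; congr 1; ext i; exact hσ i
  · ext i j
    simp only [diagonal_mul, mul_diagonal, Matrix.add_apply, hP, hR]
    rw [mul_add, add_mul]
    congr 1
    · rw [← hUD i j]
      linear_combination (if i ∈ J then (1:ℝ) else 0) * (if j ∈ J then (1:ℝ) else 0) * σ i * σ j * (hUD i j)
    · by_cases hij : i = j
      · subst hij; simp only [Matrix.diagonal_apply_eq]; linear_combination (if i ∈ J then (0:ℝ) else 1) * hσ i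
      · simp [Matrix.diagonal_apply_ne _ hij]
  · ext i j
    simp only [diagonal_mul, mul_diagonal, hP, Matrix.neg_apply]
    linear_combination (if i ∈ J then (1:ℝ) else 0) * (if j ∈ J then (1:ℝ) else 0) * (hUK i j)

lemma expand {Ω ι : Type*} [MeasurableSpace Ω] [Fintype ι] [DecidableEq ι] (μ : Measure Ω)
    [IsProbabilityMeasure μ] (s : Ω → ι → ℝ) (hs : ∀ i, Measurable (fun ω => s ω i))
    (hs01 : ∀ ω i, s ω i ∈ Icc (0:ℝ) 1) (N : ℕ) (a : ι → ℕ → ℝ) :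
    ∫ ω, ∏ i, ∑ j ∈ Finset.range N, a i j * s ω i ^ j ∂μ =
      ∑ k ∈ Fintype.piFinset (fun _ : ι => Finset.range N),
        (∏ i, a i (k i)) * ∫ ω, ∏ i, s ω i ^ k i ∂μ := by
  simp only [Finset.prod_univ_sum, Finset.prod_mul_distrib]
  rw [integral_finsetSum]
  · simp only [integral_const_mul]
  · intro k _
    refine Integrable.const_mul ?_ _
    refine Integrable.of_bound (C := 1) ?_ (Filter.Eventually.of_forall fun ω => ?_)
    · exact (Finset.measurable_prod _ fun i _ => (hs i).pow_const _).aestronglyMeasurable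
    · rw [Real.norm_of_nonneg (Finset.prod_nonneg fun i _ => pow_nonneg (hs01 ω i).1 _)]
      exact Finset.prod_le_one (fun i _ => pow_nonneg (hs01 ω i).1 _)
        (fun i _ => pow_le_one₀ (hs01 ω i).1 (hs01 ω i).2)

lemma expand3_nonneg {Ω ι : Type*} [MeasurableSpace Ω] [Fintype ι] [DecidableEq ι] (μ : Measure Ω)
    [IsProbabilityMeasure μ] (s : Ω → ι → ℝ) (hs : ∀ i, Measurable (fun ω => s ω i))
    (hs01 : ∀ ω i, s ω i ∈ Icc (0:ℝ) 1) (N : ℕ) (a : ι → ℕ → ℝ)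
    (ha : ∀ i, ∀ x ∈ Icc (0:ℝ) 1, 0 ≤ ∑ j ∈ Finset.range N, a i j * x ^ j) :
    0 ≤ ∑ k ∈ Fintype.piFinset (fun _ : ι => Finset.range N),
        (∏ i, a i (k i)) * (∫ ω, ∏ i, s ω i ^ k i ∂μ) ^ 3 := by
  have hmem : ∀ (ω : Ω × Ω × Ω) i, s ω.1 i * (s ω.2.1 i * s ω.2.2 i) ∈ Icc (0:ℝ) 1 := by
    intro ω i
    have h1 := hs01 ω.1 i
    have h2 := hs01 ω.2.1 i
    have h3 := hs01 ω.2.2 i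
    exact ⟨mul_nonneg h1.1 (mul_nonneg h2.1 h3.1),
      mul_le_one₀ h1.2 (mul_nonneg h2.1 h3.1) (mul_le_one₀ h2.2 h3.1 h3.2)⟩
  have h := expand (μ.prod (μ.prod μ)) (fun ω i => s ω.1 i * (s ω.2.1 i * s ω.2.2 i))
    (fun i => ((hs i).comp measurable_fst).mul
      (((hs i).comp (measurable_fst.comp measurable_snd)).mul
        ((hs i).comp (measurable_snd.comp measurable_snd)))) hmem N a
  have h3 : ∀ k : ι → ℕ, ∫ ω : Ω × Ω × Ω, ∏ i, (s ω.1 i * (s ω.2.1 i * s ω.2.2 i)) ^ k i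
      ∂(μ.prod (μ.prod μ)) = (∫ ω, ∏ i, s ω i ^ k i ∂μ) ^ 3 := by
    intro k
    simp only [mul_pow, Finset.prod_mul_distrib]
    rw [integral_prod_mul (fun ω => ∏ i, s ω i ^ k i)
      (fun ω : Ω × Ω => (∏ i, s ω.1 i ^ k i) * (∏ i, s ω.2 i ^ k i)),
      integral_prod_mul (fun ω => ∏ i, s ω i ^ k i) (fun ω => ∏ i, s ω i ^ k i)]
    ring
  simp only [h3] at h
  rw [← h]
  exact integral_nonneg fun ω => Finset.prod_nonneg fun i _ => ha i _ (hmem ω i)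

/-- The value `exp (-(V x)_i^2/2)`. -/
noncomputable def sv {ι κ : Type*} [Fintype κ] (V : Matrix ι κ ℝ) (x : κ → ℝ) (i : ι) : ℝ :=
  exp (-((V *ᵥ x) i) ^ 2 / 2)

lemma sv_mem {ι κ : Type*} [Fintype κ] (V : Matrix ι κ ℝ) (x : κ → ℝ) (i : ι) :
    sv V x i ∈ Icc (0:ℝ) 1 := by
  refine ⟨(exp_pos _).le, ?_⟩
  rw [sv, exp_le_one_iff]
  nlinarith [sq_nonneg ((V *ᵥ x) i)]

lemma sv_meas {ι κ : Type*} [Fintype κ] (V : Matrix ι κ ℝ) (i : ι) :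
    Measurable (fun x => sv V x i) := by
  unfold sv mulVec dotProduct; fun_prop

lemma sv_int {ι κ : Type*} [Fintype ι] [DecidableEq ι] [Fintype κ] [DecidableEq κ]
    (V : Matrix ι κ ℝ) (k : ι → ℕ) :
    ∫ x, ∏ i, sv V x i ^ k i ∂(gam κ) =
      (√(1 + diagonal (fun i => (k i : ℝ)) * (V * Vᵀ)).det)⁻¹ := by
  rw [← gauss_int V _ (fun i => Nat.cast_nonneg _)]
  congr 1; ext x
  simp only [sv, ← exp_nat_mul, ← exp_sum]
  congr 1
  rw [← Finset.sum_neg_distrib, Finset.sum_div]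
  exact Finset.sum_congr rfl fun i _ => by ring

lemma core {ι κ : Type*} [Fintype ι] [DecidableEq ι] [Fintype κ] [DecidableEq κ]
    (V : ℝ → Matrix ι κ ℝ) {D K : Matrix ι ι ℝ} {σ : ι → ℝ}
    (hV : ∀ t ∈ Icc (0:ℝ) 1, V t * (V t)ᵀ = D + t • K)
    (hσ : ∀ i, σ i * σ i = 1)
    (hD : D.PosSemidef) (h1 : (D + K).PosSemidef) (h2 : (D - K).PosSemidef)
    (hUD : ∀ i j, σ i * D i j * σ j = D i j) (hUK : ∀ i j, σ i * K i j * σ j = - K i j)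
    (N : ℕ) (a : ι → ℕ → ℝ)
    (ha : ∀ i, ∀ x ∈ Icc (0:ℝ) 1, 0 ≤ ∑ j ∈ Finset.range N, a i j * x ^ j)
    (ha' : ∀ i, ∀ x ∈ Icc (0:ℝ) 1, 0 ≤ ∑ j ∈ Finset.range N, (j * a i j) * x ^ j) :
    MonotoneOn (fun t => ∫ x, ∏ i, ∑ j ∈ Finset.range N, a i j * sv (V t) x i ^ j ∂(gam κ))
      (Icc 0 1) := by
  set S := Fintype.piFinset (fun _ : ι => Finset.range N)
  set d : Finset ι → ℝ → ℝ := fun J t =>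
    (diagonal (fun i => if i ∈ J then (1:ℝ) else 0) * (D + t • K) *
        diagonal (fun i => if i ∈ J then (1:ℝ) else 0) +
        diagonal (fun i => if i ∈ J then (0:ℝ) else 1)).det with hd
  have hanti : ∀ J, AntitoneOn (d J) (Icc 0 1) := fun J =>
    minor_antitone hσ hD h1 h2 hUD hUK J
  have hdiff : ∀ J, Differentiable ℝ (d J) := by
    intro J
    simp only [hd, Matrix.det_apply, Matrix.add_apply, diagonal_mul, mul_diagonal, Matrix.smul_apply]
    fun_prop
  set p : (ι → ℕ) → ℝ → ℝ := fun k t => ∑ J, (∏ i ∈ J, (k i : ℝ)) * d J t with hp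
  have hpd : ∀ (k : ι → ℕ) t, (1 + diagonal (fun i => (k i : ℝ)) * (D + t • K)).det = p k t :=
    fun k t => det_expand _ _
  have hppos : ∀ (k : ι → ℕ), ∀ t ∈ Icc (0:ℝ) 1, 0 < p k t := by
    intro k t ht
    rw [← hpd, ← hV t ht, ← det_aux]
    exact (posDef_aux (V t) _ (fun i => Nat.cast_nonneg _)).det_pos
  have hIntK : ∀ (k : ι → ℕ), ∀ t ∈ Icc (0:ℝ) 1,
      ∫ x, ∏ i, sv (V t) x i ^ k i ∂(gam κ) = (√(p k t))⁻¹ := by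
    intro k t ht
    rw [sv_int, hV t ht, hpd]
  have hEq : EqOn (fun t => ∑ k ∈ S, (∏ i, a i (k i)) * (√(p k t))⁻¹)
      (fun t => ∫ x, ∏ i, ∑ j ∈ Finset.range N, a i j * sv (V t) x i ^ j ∂(gam κ)) (Icc 0 1) := by
    intro t ht
    simp only
    rw [expand (gam κ) (sv (V t)) (sv_meas _) (sv_mem _)]
    exact Finset.sum_congr rfl fun k _ => by rw [hIntK k t ht]
  refine MonotoneOn.congr ?_ hEq
  have hpderiv : ∀ k t, HasDerivAt (p k) (∑ J, (∏ i ∈ J, (k i : ℝ)) * deriv (d J) t) t := by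
    intro k t
    exact HasDerivAt.fun_sum fun J _ => ((hdiff J t).hasDerivAt).const_mul _
  have hderiv : ∀ t ∈ Icc (0:ℝ) 1, HasDerivAt (fun t => ∑ k ∈ S, (∏ i, a i (k i)) * (√(p k t))⁻¹)
      (∑ k ∈ S, (∏ i, a i (k i)) * (-((∑ J, (∏ i ∈ J, (k i : ℝ)) * deriv (d J) t) /
        (2 * √(p k t))) / (√(p k t)) ^ 2)) t := by
    intro t ht
    refine HasDerivAt.fun_sum fun k _ => HasDerivAt.const_mul _ ?_
    exact ((hpderiv k t).sqrt (hppos k t ht).ne').inv (Real.sqrt_pos.2 (hppos k t ht)).ne'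
  refine monotoneOn_of_deriv_nonneg (convex_Icc 0 1)
    (fun t ht => (hderiv t ht).continuousAt.continuousWithinAt)
    (fun t ht => (hderiv t (interior_subset ht)).differentiableAt.differentiableWithinAt) ?_
  intro t ht
  have htI := interior_subset ht
  rw [(hderiv t htI).deriv]
  have hdneg : ∀ J, deriv (d J) t ≤ 0 := by
    intro J
    have hn : Icc (0:ℝ) 1 ∈ nhds t := mem_interior_iff_mem_nhds.1 ht
    rw [← derivWithin_of_mem_nhds hn]
    exact (hanti J).derivWithin_nonpos
  have hrew : (∑ k ∈ S, (∏ i, a i (k i)) * (-((∑ J, (∏ i ∈ J, (k i : ℝ)) * deriv (d J) t) /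
        (2 * √(p k t))) / (√(p k t)) ^ 2)) =
      ∑ J, (-(deriv (d J) t) / 2) * ∑ k ∈ S,
        (∏ i, (if i ∈ J then (k i : ℝ) * a i (k i) else a i (k i))) *
          (∫ x, ∏ i, sv (V t) x i ^ k i ∂(gam κ)) ^ 3 := by
    simp only [Finset.mul_sum]
    rw [Finset.sum_comm]
    refine Finset.sum_congr rfl fun k _ => ?_
    rw [hIntK k t htI]
    have hs : √(p k t) ≠ 0 := (Real.sqrt_pos.2 (hppos k t htI)).ne'
    rw [Finset.sum_div, ← Finset.sum_neg_distrib, Finset.sum_div, Finset.mul_sum]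
    refine Finset.sum_congr rfl fun J _ => ?_
    have : (∏ i, (if i ∈ J then (k i : ℝ) * a i (k i) else a i (k i))) =
        (∏ i ∈ J, (k i : ℝ)) * ∏ i, a i (k i) := by
      rw [← Finset.univ_inter J, ← Finset.prod_ite_mem, ← Finset.prod_mul_distrib]
      refine Finset.prod_congr rfl fun i _ => ?_
      simp
    rw [this]
    field_simp
  rw [hrew]
  refine Finset.sum_nonneg fun J _ => mul_nonneg (by linarith [hdneg J]) ?_
  refine expand3_nonneg (gam κ) (sv (V t)) (sv_meas _) (sv_mem _) N
    (fun i j => if i ∈ J then (j : ℝ) * a i j else a i j) ?_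
  intro i x hx
  by_cases hi : i ∈ J
  · simp only [hi, if_true]; exact ha' i x hx
  · simp only [hi, if_false]; exact ha i x hx

end GCI

namespace GCI
open Matrix

lemma poly_sum (q : Polynomial ℝ) (x : ℝ) :
    ∑ j ∈ Finset.range (q.natDegree + 2), q.coeff j * x ^ j = q.eval x :=
  (Polynomial.eval_eq_sum_range' (by omega) x).symm

lemma poly_sum' (q : Polynomial ℝ) (x : ℝ) :
    ∑ j ∈ Finset.range (q.natDegree + 2), (j * q.coeff j) * x ^ j =
      x * (Polynomial.derivative q).eval x := by
  have hdeg : (Polynomial.X * Polynomial.derivative q).natDegree < q.natDegree + 2 := by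
    have h1 := Polynomial.natDegree_mul_le (p := Polynomial.X) (q := Polynomial.derivative q)
    have h2 := Polynomial.natDegree_derivative_le q
    have h3 := Polynomial.natDegree_X_le (R := ℝ)
    omega
  have := Polynomial.eval_eq_sum_range' hdeg x
  rw [Polynomial.eval_mul, Polynomial.eval_X] at this
  rw [this]
  refine Finset.sum_congr rfl fun j _ => ?_
  congr 1
  cases j with
  | zero => simp
  | succ j => rw [Polynomial.coeff_X_mul, Polynomial.coeff_derivative]; push_cast; ring

lemma integral_split {ν : Type*} [Fintype ν] (f g : (ν → ℝ) → ℝ) :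
    ∫ x, f (fun i => x (Sum.inl i)) * g (fun i => x (Sum.inr i)) ∂(gam (ν ⊕ ν)) =
      (∫ x, f x ∂(gam ν)) * ∫ x, g x ∂(gam ν) := by
  have h := (measurePreserving_sumPiEquivProdPi (X := fun _ : ν ⊕ ν => ℝ)
    (fun _ => ProbabilityTheory.gaussianReal 0 1))
  have h2 := h.integral_comp' (fun z => f z.1 * g z.2)
  rw [integral_prod_mul] at h2
  exact h2

/-- The interpolating matrices. -/
noncomputable def interp {ι ν : Type*} (v : Matrix ι ν ℝ) (b : ι → Bool) (t : ℝ) :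
    Matrix ι (ν ⊕ ν) ℝ :=
  Matrix.of fun i => if b i then Sum.elim (v i) (fun _ => 0)
    else Sum.elim (fun l => t * v i l) (fun l => √(1 - t ^ 2) * v i l)

lemma interp_gram {ι ν : Type*} [Fintype ν] (v : Matrix ι ν ℝ) (b : ι → Bool)
    (t : ℝ) (ht : t ∈ Icc (0:ℝ) 1) :
    interp v b t * (interp v b t)ᵀ =
      (Matrix.of fun i j => if b i = b j then (v * vᵀ) i j else 0) +
      t • (Matrix.of fun i j => if b i = b j then 0 else (v * vᵀ) i j) := by
  have hsq : √(1 - t ^ 2) * √(1 - t ^ 2) = 1 - t ^ 2 :=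
    Real.mul_self_sqrt (by nlinarith [ht.1, ht.2])
  ext i j
  simp only [interp, Matrix.mul_apply, Matrix.transpose_apply, Matrix.of_apply, Matrix.add_apply,
    Matrix.smul_apply, Fintype.sum_sum_type, smul_eq_mul]
  cases hi : b i <;> cases hj : b j <;> simp [Finset.mul_sum]
  · rw [← Finset.sum_add_distrib]
    refine Finset.sum_congr rfl fun l _ => ?_
    linear_combination v i l * v j l * hsq
  · exact Finset.sum_congr rfl fun l _ => by ring
  · exact Finset.sum_congr rfl fun l _ => by ring

lemma interp_mono {ι ν : Type*} [Fintype ι] [DecidableEq ι] [Fintype ν] [DecidableEq ν]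
    (v : Matrix ι ν ℝ) (b : ι → Bool) (q : Polynomial ℝ)
    (hq : ∀ x ∈ Icc (0:ℝ) 1, 0 ≤ q.eval x)
    (hq' : ∀ x ∈ Icc (0:ℝ) 1, 0 ≤ (Polynomial.derivative q).eval x) :
    ∫ x, ∏ i, q.eval (sv (interp v b 0) x i) ∂(gam (ν ⊕ ν)) ≤
    ∫ x, ∏ i, q.eval (sv (interp v b 1) x i) ∂(gam (ν ⊕ ν)) := by
  set D : Matrix ι ι ℝ := (Matrix.of fun i j => if b i = b j then (v * vᵀ) i j else 0) with hD
  set K : Matrix ι ι ℝ := (Matrix.of fun i j => if b i = b j then 0 else (v * vᵀ) i j) with hK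
  set σ : ι → ℝ := fun i => if b i then 1 else -1 with hσ
  have hσσ : ∀ i, σ i * σ i = 1 := by intro i; simp only [hσ]; split_ifs <;> norm_num
  have hG : (v * vᵀ).PosSemidef := Matrix.posSemidef_self_mul_conjTranspose v
  have hp : (D + K).PosSemidef := by
    convert hG using 1
    ext i j
    simp only [hD, hK, Matrix.add_apply, Matrix.of_apply]
    split_ifs <;> simp
  have hm : (D - K).PosSemidef := by
    have := hG.mul_mul_conjTranspose_same (Matrix.diagonal σ)
    rw [diagonal_conjTranspose] at this
    convert this using 1
    ext i j
    simp only [hD, hK, Matrix.sub_apply, Matrix.of_apply, diagonal_mul, mul_diagonal, hσ, star_trivial]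
    cases hi : b i <;> cases hj : b j <;> simp
  have hDp : D.PosSemidef := by
    have := (hp.add hm).smul (α := ℝ) (show (0:ℝ) ≤ 1 / 2 by norm_num)
    convert this using 1
    ext i j
    simp only [Matrix.smul_apply, Matrix.add_apply, Matrix.sub_apply, smul_eq_mul]; ring
  have := core (interp v b) (D := D) (K := K) (σ := σ) (interp_gram v b) hσσ hDp hp hm ?_ ?_
    (q.natDegree + 2) (fun _ j => q.coeff j) ?_ ?_
  · have h := this (left_mem_Icc.2 zero_le_one) (right_mem_Icc.2 zero_le_one) zero_le_one
    simpa only [poly_sum] using h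
  · intro i j
    simp only [hD, Matrix.of_apply, hσ]
    cases hi : b i <;> cases hj : b j <;> simp
  · intro i j
    simp only [hK, Matrix.of_apply, hσ]
    cases hi : b i <;> cases hj : b j <;> simp
  · intro i x hx
    rw [poly_sum]; exact hq x hx
  · intro i x hx
    rw [poly_sum']; exact mul_nonneg hx.1 (hq' x hx)

lemma poly_ineq {ι ν : Type*} [Fintype ι] [DecidableEq ι] [Fintype ν] [DecidableEq ν]
    (v : Matrix ι ν ℝ) (b : ι → Bool) (q : Polynomial ℝ)
    (hq : ∀ x ∈ Icc (0:ℝ) 1, 0 ≤ q.eval x)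
    (hq' : ∀ x ∈ Icc (0:ℝ) 1, 0 ≤ (Polynomial.derivative q).eval x) :
    (∫ x, ∏ i, (if b i then q.eval (sv v x i) else 1) ∂(gam ν)) *
      (∫ x, ∏ i, (if b i then 1 else q.eval (sv v x i)) ∂(gam ν)) ≤
    ∫ x, ∏ i, q.eval (sv v x i) ∂(gam ν) := by
  have h := interp_mono v b q hq hq'
  have e0 : ∀ x : ν ⊕ ν → ℝ, ∏ i, q.eval (sv (interp v b 0) x i) =
      (∏ i, (if b i then q.eval (sv v (fun i => x (Sum.inl i)) i) else 1)) *
      (∏ i, (if b i then 1 else q.eval (sv v (fun i => x (Sum.inr i)) i))) := by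
    intro x
    rw [← Finset.prod_mul_distrib]
    refine Finset.prod_congr rfl fun i _ => ?_
    cases hi : b i <;> simp [sv, interp, mulVec, dotProduct, hi]
  have e1 : ∀ x : ν ⊕ ν → ℝ, ∏ i, q.eval (sv (interp v b 1) x i) =
      (∏ i, q.eval (sv v (fun i => x (Sum.inl i)) i)) * 1 := by
    intro x
    rw [mul_one]
    refine Finset.prod_congr rfl fun i _ => ?_
    cases hi : b i <;> simp [sv, interp, mulVec, dotProduct]
  simp only [e0, e1] at h
  rw [integral_split (fun x => ∏ i, (if b i then q.eval (sv v x i) else 1))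
    (fun x => ∏ i, (if b i then 1 else q.eval (sv v x i))),
    integral_split (fun x => ∏ i, q.eval (sv v x i)) (fun _ => 1)] at h
  simpa using h

/-- Approximating polynomials. -/
noncomputable def qpoly (k : ℕ) : Polynomial ℝ :=
  1 - (1 - Polynomial.X ^ k) ^ (⌈(k : ℝ) * exp (1 / 2) ^ k⌉₊)

lemma qpoly_eval (k : ℕ) (x : ℝ) :
    (qpoly k).eval x = 1 - (1 - x ^ k) ^ (⌈(k : ℝ) * exp (1 / 2) ^ k⌉₊) := by
  simp [qpoly]

lemma qpoly_mem (k : ℕ) (x : ℝ) (hx : x ∈ Icc (0:ℝ) 1) : (qpoly k).eval x ∈ Icc (0:ℝ) 1 := by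
  rw [qpoly_eval]
  have h1 : x ^ k ≤ 1 := pow_le_one₀ hx.1 hx.2
  have h2 : 0 ≤ x ^ k := pow_nonneg hx.1 _
  have h3 : (1 - x ^ k) ^ (⌈(k : ℝ) * exp (1 / 2) ^ k⌉₊) ≤ 1 :=
    pow_le_one₀ (by linarith) (by linarith)
  have h4 : 0 ≤ (1 - x ^ k) ^ (⌈(k : ℝ) * exp (1 / 2) ^ k⌉₊) := pow_nonneg (by linarith) _
  constructor <;> linarith

lemma qpoly_deriv (k : ℕ) (x : ℝ) (hx : x ∈ Icc (0:ℝ) 1) :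
    0 ≤ (Polynomial.derivative (qpoly k)).eval x := by
  have h1 : x ^ k ≤ 1 := pow_le_one₀ hx.1 hx.2
  have h2 : 0 ≤ 1 - x ^ k := by linarith
  have h0 := hx.1
  have h3 : (Polynomial.derivative (qpoly k)).eval x =
      (⌈(k : ℝ) * exp (1 / 2) ^ k⌉₊ : ℝ) * (1 - x ^ k) ^ (⌈(k : ℝ) * exp (1 / 2) ^ k⌉₊ - 1) *
        (k * x ^ (k - 1)) := by
    simp [qpoly, Polynomial.derivative_pow]
  rw [h3]
  positivity

lemma qpoly_tendsto (x : ℝ) (hx : x ∈ Icc (0:ℝ) 1) :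
    Filter.Tendsto (fun k => (qpoly k).eval x) Filter.atTop
      (nhds (if exp (-1 / 2) ≤ x then 1 else 0)) := by
  simp only [qpoly_eval]
  set c := exp (1 / 2) with hc
  have hc1 : exp (-1 / 2) = c⁻¹ := by rw [hc, ← exp_neg]; norm_num
  have hcpos : 0 < c := exp_pos _
  have hxk : ∀ k : ℕ, x ^ k ≤ 1 := fun k => pow_le_one₀ hx.1 hx.2
  have hxk0 : ∀ k : ℕ, 0 ≤ x ^ k := fun k => pow_nonneg hx.1 _
  rw [hc1]
  split_ifs with h
  · have hcx : 1 ≤ c * x := by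
      have := mul_le_mul_of_nonneg_left h hcpos.le
      rwa [mul_inv_cancel₀ hcpos.ne'] at this
    have hlim : Filter.Tendsto (fun k : ℕ => exp (-(k : ℝ))) Filter.atTop (nhds 0) :=
      (Real.tendsto_exp_neg_atTop_nhds_zero).comp tendsto_natCast_atTop_atTop
    have : Filter.Tendsto (fun k : ℕ => (1 - x ^ k) ^ (⌈(k : ℝ) * c ^ k⌉₊)) Filter.atTop (nhds 0) := by
      refine squeeze_zero (fun k => pow_nonneg (by linarith [hxk k]) _) (fun k => ?_) hlim
      calc (1 - x ^ k) ^ (⌈(k : ℝ) * c ^ k⌉₊) ≤ (exp (-x ^ k)) ^ (⌈(k : ℝ) * c ^ k⌉₊) := by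
            refine pow_le_pow_left₀ (by linarith [hxk k]) ?_ _
            have := Real.add_one_le_exp (-x ^ k)
            linarith
        _ = exp (-((⌈(k : ℝ) * c ^ k⌉₊ : ℝ) * x ^ k)) := by
            rw [← exp_nat_mul]; congr 1; ring
        _ ≤ exp (-(k : ℝ)) := by
            rw [exp_le_exp, neg_le_neg_iff]
            calc (k : ℝ) ≤ k * (c * x) ^ k := le_mul_of_one_le_right (Nat.cast_nonneg _) (one_le_pow₀ hcx)
              _ = (k * c ^ k) * x ^ k := by rw [mul_pow]; ring
              _ ≤ _ := mul_le_mul_of_nonneg_right (Nat.le_ceil _) (hxk0 k)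
    simpa using this.const_sub 1
  · push Not at h
    have hcx : c * x < 1 := by
      have := mul_lt_mul_of_pos_left h hcpos
      rwa [mul_inv_cancel₀ hcpos.ne'] at this
    have hcx0 : 0 ≤ c * x := mul_nonneg hcpos.le hx.1
    have hc1' : 1 < c := by rw [hc]; exact one_lt_exp_iff.2 (by norm_num)
    have hx1 : x < 1 := by nlinarith [hx.1]
    have l1 := tendsto_self_mul_const_pow_of_lt_one hcx0 hcx
    have l2 := tendsto_pow_atTop_nhds_zero_of_lt_one hx.1 hx1
    have l3 := l1.add l2
    rw [add_zero] at l3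
    refine squeeze_zero (fun k => ?_) (fun k => ?_) l3
    · have : (1 - x ^ k) ^ (⌈(k : ℝ) * c ^ k⌉₊) ≤ 1 :=
        pow_le_one₀ (by linarith [hxk k]) (by linarith [hxk0 k])
      linarith
    · have hb := one_add_mul_le_pow (a := -x ^ k) (by linarith [hxk k]) (⌈(k : ℝ) * c ^ k⌉₊)
      have hceil : (⌈(k : ℝ) * c ^ k⌉₊ : ℝ) ≤ (k : ℝ) * c ^ k + 1 := (Nat.ceil_lt_add_one (by positivity)).le
      have := mul_le_mul_of_nonneg_right hceil (hxk0 k)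
      have e : (1 - x ^ k) = (1 + -x ^ k) := by ring
      rw [e, mul_pow]
      nlinarith

lemma sv_ge {ι ν : Type*} [Fintype ν] (v : Matrix ι ν ℝ) (x : ν → ℝ) (i : ι) :
    exp (-1 / 2) ≤ sv v x i ↔ |(v *ᵥ x) i| ≤ 1 := by
  rw [sv, exp_le_exp, ← sq_le_one_iff_abs_le_one]
  constructor <;> intro h <;> linarith

lemma limit_int {ι ν : Type*} [Fintype ι] [Fintype ν] (v : Matrix ι ν ℝ) (c : ι → Bool) :
    Filter.Tendsto (fun k => ∫ x, ∏ i, (if c i then (qpoly k).eval (sv v x i) else 1) ∂(gam ν))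
      Filter.atTop (nhds ((gam ν).real {x | ∀ i, c i → |(v *ᵥ x) i| ≤ 1})) := by
  have hmv : ∀ i, Measurable fun x : ν → ℝ => (v *ᵥ x) i := by
    intro i; unfold mulVec dotProduct; fun_prop
  have hms : MeasurableSet {x : ν → ℝ | ∀ i, c i → |(v *ᵥ x) i| ≤ 1} := by
    simp only [ofPred_forall]
    refine MeasurableSet.iInter fun i => MeasurableSet.iInter fun _ => ?_
    exact measurableSet_le (hmv i).abs measurable_const
  rw [← integral_indicator_one hms]
  refine tendsto_integral_of_dominated_convergence (fun _ => 1) (fun k => ?_) (integrable_const _)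
    (fun k => Filter.Eventually.of_forall fun x => ?_) (Filter.Eventually.of_forall fun x => ?_)
  · refine (Finset.measurable_prod _ fun i _ => ?_).aestronglyMeasurable
    split_ifs
    · exact (Polynomial.continuous _).measurable.comp (sv_meas v i)
    · exact measurable_const
  · have hm : ∀ i, (if c i then (qpoly k).eval (sv v x i) else 1) ∈ Icc (0:ℝ) 1 := by
      intro i
      split_ifs
      · exact qpoly_mem k _ (sv_mem v x i)
      · simp
    rw [Real.norm_of_nonneg (Finset.prod_nonneg fun i _ => (hm i).1)]
    exact Finset.prod_le_one (fun i _ => (hm i).1) (fun i _ => (hm i).2)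
  · have : ({x : ν → ℝ | ∀ i, c i → |(v *ᵥ x) i| ≤ 1}.indicator 1 x : ℝ) =
        ∏ i, (if c i then (if exp (-1 / 2) ≤ sv v x i then (1:ℝ) else 0) else 1) := by
      by_cases hx : ∀ i, c i → |(v *ᵥ x) i| ≤ 1
      · rw [indicator_of_mem (by exact hx), Pi.one_apply, Finset.prod_eq_one]
        intro i _
        split_ifs with h1 h2
        · rfl
        · exact absurd ((sv_ge v x i).2 (hx i h1)) h2
        · rfl
      · rw [indicator_of_notMem (by exact hx)]
        push Not at hx
        obtain ⟨i, hi, hlt⟩ := hx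
        refine (Finset.prod_eq_zero (Finset.mem_univ i) ?_).symm
        rw [if_pos hi, if_neg]
        rw [sv_ge]; exact not_le.2 hlt
    rw [this]
    refine tendsto_finsetProd _ fun i _ => ?_
    split_ifs with h1 h2
    · have := qpoly_tendsto _ (sv_mem v x i)
      rwa [if_pos h2] at this
    · have := qpoly_tendsto _ (sv_mem v x i)
      rwa [if_neg h2] at this
    · exact tendsto_const_nhds

lemma slab_ineq {ι ν : Type*} [Fintype ι] [DecidableEq ι] [Fintype ν] [DecidableEq ν]
    (v : Matrix ι ν ℝ) (b : ι → Bool) :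
    (gam ν).real {x | ∀ i, b i → |(v *ᵥ x) i| ≤ 1} *
      (gam ν).real {x | ∀ i, !b i → |(v *ᵥ x) i| ≤ 1} ≤
    (gam ν).real {x | ∀ i, |(v *ᵥ x) i| ≤ 1} := by
  have l1 := limit_int v b
  have l2 := limit_int v (fun i => !b i)
  have l3 := limit_int v (fun _ => true)
  have l3' : {x | ∀ i, (fun _ : ι => true) i → |(v *ᵥ x) i| ≤ 1} = {x | ∀ i, |(v *ᵥ x) i| ≤ 1} := by
    simp
  rw [l3'] at l3
  have e : ∀ (i : ι) (y : ℝ), (if (!b i) = true then y else 1) = if b i = true then 1 else y := by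
    intro i y
    cases b i <;> simp
  simp only [e] at l2
  simp only [if_true] at l3
  exact le_of_tendsto_of_tendsto' (l1.mul l2) l3 fun k =>
    poly_ineq v b (qpoly k) (fun x hx => (qpoly_mem k x hx).1) (qpoly_deriv k)

end GCI

namespace GCI
open Matrix

lemma dens_toLp {n : ℕ} (x : Fin n → ℝ) :
    (2 * π) ^ (-(n : ℝ) / 2) * Real.exp (-‖(WithLp.toLp 2 x : EuclideanSpace ℝ (Fin n))‖ ^ 2 / 2) =
      dens x := by
  rw [dens, EuclideanSpace.norm_sq_eq]
  have h2 : (0:ℝ) < 2 * π := by positivity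
  congr 1
  · rw [Fintype.card_fin, Real.sqrt_eq_rpow, ← Real.rpow_neg h2.le, ← Real.rpow_natCast,
      ← Real.rpow_mul h2.le]
    congr 1; ring
  · simp [dotProduct, sq]

lemma stdGaussian_eq_map (n : ℕ) :
    stdGaussian n = (gam (Fin n)).map (WithLp.toLp 2) := by
  have hmp := EuclideanSpace.volume_preserving_symm_measurableEquiv_toLp (Fin n)
  have hmp' := PiLp.volume_preserving_toLp (Fin n)
  ext S hS
  rw [Measure.map_apply hmp'.measurable hS, stdGaussian, gam_eq, withDensity_apply _ hS,
    withDensity_apply _ (hmp'.measurable hS),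
    ← hmp'.setLIntegral_comp_preimage hS]
  · simp only [dens_toLp]
  · fun_prop

instance (n : ℕ) : IsProbabilityMeasure (stdGaussian n) := by
  rw [stdGaussian_eq_map]
  exact Measure.isProbabilityMeasure_map (PiLp.volume_preserving_toLp (Fin n)).measurable.aemeasurable

lemma slab_meas {n : ℕ} {ι : Type*} [Countable ι] (f : ι → StrongDual ℝ (EuclideanSpace ℝ (Fin n)))
    (p : ι → Prop) : MeasurableSet {x | ∀ i, p i → |f i x| ≤ 1} := by
  simp only [ofPred_forall]
  refine MeasurableSet.iInter fun i => MeasurableSet.iInter fun _ => ?_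
  exact measurableSet_le (f i).continuous.measurable.abs measurable_const

lemma slab_std {n : ℕ} {ι : Type*} [Fintype ι] [DecidableEq ι]
    (f : ι → StrongDual ℝ (EuclideanSpace ℝ (Fin n))) (b : ι → Bool) :
    (stdGaussian n).real {x | ∀ i, b i → |f i x| ≤ 1} *
      (stdGaussian n).real {x | ∀ i, !b i → |f i x| ≤ 1} ≤
    (stdGaussian n).real {x | ∀ i, |f i x| ≤ 1} := by
  set v : Matrix ι (Fin n) ℝ := Matrix.of fun i l => f i (EuclideanSpace.single l 1) with hv
  have hm := (PiLp.volume_preserving_toLp (Fin n)).measurable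
  have hvx : ∀ i x, (v *ᵥ x) i = f i (WithLp.toLp 2 x) := by
    intro i x
    have hx : (WithLp.toLp 2 x : EuclideanSpace ℝ (Fin n)) =
        ∑ l, x l • EuclideanSpace.single l (1:ℝ) := by
      ext j
      simp [Pi.single_apply]
    rw [hx, map_sum]
    simp only [map_smul, smul_eq_mul, mulVec, dotProduct, hv, Matrix.of_apply]
    exact Finset.sum_congr rfl fun l _ => mul_comm _ _
  have h := slab_ineq v b
  simp only [hvx] at h
  have h3 := slab_meas f (fun _ => True)
  simp only [true_imp_iff] at h3
  rw [stdGaussian_eq_map, map_measureReal_apply hm (slab_meas f _),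
    map_measureReal_apply hm (slab_meas f _), map_measureReal_apply hm h3]
  exact h

lemma countable_slab {n : ℕ} (f g : ℕ → StrongDual ℝ (EuclideanSpace ℝ (Fin n))) :
    (stdGaussian n).real {x | ∀ i, |f i x| ≤ 1} * (stdGaussian n).real {x | ∀ i, |g i x| ≤ 1} ≤
    (stdGaussian n).real ({x | ∀ i, |f i x| ≤ 1} ∩ {x | ∀ i, |g i x| ≤ 1}) := by
  have lim : ∀ s : ℕ → Set (EuclideanSpace ℝ (Fin n)), (∀ N, MeasurableSet (s N)) → Antitone s →
      Filter.Tendsto (fun N => (stdGaussian n).real (s N)) Filter.atTop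
        (nhds ((stdGaussian n).real (⋂ N, s N))) := by
    intro s hs hanti
    have := tendsto_measure_iInter_atTop (μ := stdGaussian n) (fun N => (hs N).nullMeasurableSet)
      hanti ⟨0, measure_ne_top _ _⟩
    exact (ENNReal.tendsto_toReal (measure_ne_top _ _)).comp this
  have eI : ∀ f : ℕ → StrongDual ℝ (EuclideanSpace ℝ (Fin n)),
      {x | ∀ i, |f i x| ≤ 1} = ⋂ N : ℕ, {x | ∀ i, i < N → |f i x| ≤ 1} := by
    intro f; ext x
    simp only [mem_iInter, mem_ofPred_eq]
    exact ⟨fun h N i _ => h i, fun h i => h (i + 1) i (Nat.lt_succ_self i)⟩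
  have hanti : ∀ f : ℕ → StrongDual ℝ (EuclideanSpace ℝ (Fin n)),
      Antitone fun N : ℕ => {x | ∀ i, i < N → |f i x| ≤ 1} :=
    fun f N M hNM x hx i hi => hx i (hi.trans_le hNM)
  have hmeas : ∀ (f : ℕ → StrongDual ℝ (EuclideanSpace ℝ (Fin n))) (N : ℕ),
      MeasurableSet {x | ∀ i, i < N → |f i x| ≤ 1} := fun f N => slab_meas f _
  have l1 := lim _ (hmeas f) (hanti f)
  have l2 := lim _ (hmeas g) (hanti g)
  have l3 := lim (fun N => {x | ∀ i, i < N → |f i x| ≤ 1} ∩ {x | ∀ i, i < N → |g i x| ≤ 1})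
    (fun N => (hmeas f N).inter (hmeas g N)) (fun N M h => inter_subset_inter (hanti f h) (hanti g h))
  rw [iInter_inter_distrib, ← eI, ← eI] at l3
  rw [← eI] at l1 l2
  refine le_of_tendsto_of_tendsto' (l1.mul l2) l3 fun N => ?_
  have h := slab_std (n := n) (ι := Fin N ⊕ Fin N)
    (Sum.elim (fun i => f i) (fun i => g i)) Sum.isLeft
  have s1 : {x | ∀ i, i < N → |f i x| ≤ 1} = {x | ∀ i : Fin N ⊕ Fin N, Sum.isLeft i →
      |(Sum.elim (fun i : Fin N => f i) (fun i : Fin N => g i) i) x| ≤ 1} := by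
    ext x; simp [Fin.forall_iff]
  have s2 : {x | ∀ i, i < N → |g i x| ≤ 1} = {x | ∀ i : Fin N ⊕ Fin N, !Sum.isLeft i →
      |(Sum.elim (fun i : Fin N => f i) (fun i : Fin N => g i) i) x| ≤ 1} := by
    ext x; simp [Fin.forall_iff]
  have s3 : {x | ∀ i, i < N → |f i x| ≤ 1} ∩ {x | ∀ i, i < N → |g i x| ≤ 1} =
      {x | ∀ i : Fin N ⊕ Fin N,
        |(Sum.elim (fun i : Fin N => f i) (fun i : Fin N => g i) i) x| ≤ 1} := by
    ext x; simp [Fin.forall_iff]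
  rw [← s1, ← s2, ← s3] at h
  exact h

lemma exists_slabs {n : ℕ} {A : Set (EuclideanSpace ℝ (Fin n))} (hA : IsClosed A)
    (hconv : Convex ℝ A) (hsymm : ∀ x ∈ A, -x ∈ A) (hne : A.Nonempty) :
    ∃ f : ℕ → StrongDual ℝ (EuclideanSpace ℝ (Fin n)), A = {x | ∀ i, |f i x| ≤ 1} := by
  have h0 : (0 : EuclideanSpace ℝ (Fin n)) ∈ A := by
    obtain ⟨x, hx⟩ := hne
    have := hconv hx (hsymm x hx) (a := 1 / 2) (b := 1 / 2) (by norm_num) (by norm_num) (by norm_num)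
    simpa using this
  let T := {f : StrongDual ℝ (EuclideanSpace ℝ (Fin n)) // ∀ a ∈ A, |f a| ≤ 1}
  have hsep : ∀ x, x ∉ A → ∃ f : T, 1 < |f.1 x| := by
    intro x hx
    obtain ⟨f, u, hfu, hux⟩ := geometric_hahn_banach_closed_point hconv hA hx
    have hu : 0 < u := by simpa using hfu 0 h0
    refine ⟨⟨u⁻¹ • f, fun a ha => ?_⟩, ?_⟩
    · have h1 := hfu a ha
      have h2 := hfu (-a) (hsymm a ha)
      rw [map_neg] at h2
      rw [_root_.smul_apply, smul_eq_mul, abs_mul, abs_of_pos (inv_pos.2 hu),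
        inv_mul_le_one₀ hu]
      exact abs_le.2 ⟨by linarith, h1.le⟩
    · change 1 < |(u⁻¹ • f) x|
      rw [_root_.smul_apply, smul_eq_mul, abs_mul, abs_of_pos (inv_pos.2 hu),
        lt_inv_mul_iff₀ hu, mul_one]
      exact hux.trans_le (le_abs_self _)
  obtain ⟨C, hC, hCu⟩ := TopologicalSpace.isOpen_iUnion_countable
    (fun f : T => {x | 1 < |f.1 x|})
    (fun f => isOpen_lt continuous_const f.1.continuous.abs)
  let z : T := ⟨0, fun a _ => by simp⟩
  have hC' : (insert z C).Countable := hC.insert z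
  obtain ⟨e, he⟩ := hC'.exists_eq_range (insert_nonempty z C)
  refine ⟨fun i => (e i).1, ?_⟩
  ext x
  constructor
  · intro hx i
    exact (e i).2 x hx
  · intro hx
    by_contra hxA
    obtain ⟨f, hf⟩ := hsep x hxA
    have hmem : x ∈ ⋃ f : T, {x | 1 < |f.1 x|} := mem_iUnion.2 ⟨f, hf⟩
    rw [← hCu] at hmem
    obtain ⟨g, hg, hgx⟩ := mem_iUnion₂.1 hmem
    have : g ∈ range e := by rw [← he]; exact mem_insert_of_mem _ hg
    obtain ⟨i, rfl⟩ := this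
    exact absurd (hx i) (not_le.2 hgx)

lemma two_closed {n : ℕ} {A B : Set (EuclideanSpace ℝ (Fin n))} (hA : IsClosed A) (hB : IsClosed B)
    (hAc : Convex ℝ A) (hBc : Convex ℝ B) (hAs : ∀ x ∈ A, -x ∈ A) (hBs : ∀ x ∈ B, -x ∈ B) :
    stdGaussian n A * stdGaussian n B ≤ stdGaussian n (A ∩ B) := by
  rcases A.eq_empty_or_nonempty with rfl | hAn
  · simp
  rcases B.eq_empty_or_nonempty with rfl | hBn
  · simp
  obtain ⟨f, hf⟩ := exists_slabs hA hAc hAs hAn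
  obtain ⟨g, hg⟩ := exists_slabs hB hBc hBs hBn
  have h := countable_slab f g
  rw [← hf, ← hg] at h
  rw [← ENNReal.toReal_le_toReal (ENNReal.mul_ne_top (measure_ne_top _ _) (measure_ne_top _ _))
    (measure_ne_top _ _), ENNReal.toReal_mul]
  exact h

lemma closure_ae {n : ℕ} {A : Set (EuclideanSpace ℝ (Fin n))} (hA : Convex ℝ A) :
    closure A =ᵐ[stdGaussian n] A := by
  have h0 : stdGaussian n (frontier A) = 0 :=
    withDensity_absolutelyContinuous _ _ (hA.addHaar_frontier volume)
  have hle : A ≤ᵐ[stdGaussian n] closure A := Filter.Eventually.of_forall fun x hx => subset_closure hx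
  refine Filter.EventuallyLE.antisymm ?_ hle
  rw [ae_le_set]
  exact measure_mono_null (sdiff_subset_sdiff_right interior_subset) h0

lemma two_convex {n : ℕ} {A B : Set (EuclideanSpace ℝ (Fin n))}
    (hAc : Convex ℝ A) (hBc : Convex ℝ B) (hAs : ∀ x ∈ A, -x ∈ A) (hBs : ∀ x ∈ B, -x ∈ B) :
    stdGaussian n A * stdGaussian n B ≤ stdGaussian n (A ∩ B) := by
  have hs : ∀ A : Set (EuclideanSpace ℝ (Fin n)), (∀ x ∈ A, -x ∈ A) → ∀ x ∈ closure A, -x ∈ closure A :=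
    fun A hA x hx => map_mem_closure continuous_neg hx hA
  have h := two_closed (isClosed_closure (s := A)) (isClosed_closure (s := B)) hAc.closure hBc.closure
    (hs A hAs) (hs B hBs)
  rwa [measure_congr (closure_ae hAc), measure_congr (closure_ae hBc),
    measure_congr ((closure_ae hAc).inter (closure_ae hBc))] at h

end GCI

/-- The Gaussian correlation inequality for finitely many symmetric convex sets. -/
theorem stmt10 (n m : ℕ) (A : Fin m → Set (EuclideanSpace ℝ (Fin n)))
    (hA : ∀ j, MeasurableSet (A j)) (hAconv : ∀ j, Convex ℝ (A j))
    (hAsymm : ∀ j, ∀ x ∈ A j, -x ∈ A j) :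
    ∏ j : Fin m, stdGaussian n (A j) ≤ stdGaussian n (⋂ j, A j) := by
  induction m with
  | zero => simp
  | succ m ih =>
    rw [Fin.prod_univ_succ]
    have e : (⋂ j, A j) = A 0 ∩ ⋂ j : Fin m, A j.succ := by
      ext x; simp [Fin.forall_fin_succ]
    rw [e]
    refine le_trans (mul_le_mul_right (ih (fun j => A j.succ) (fun j => hA _) (fun j => hAconv _)
      (fun j => hAsymm _)) _) ?_
    refine GCI.two_convex (hAconv 0) (convex_iInter fun j => hAconv _) (hAsymm 0) ?_
    intro x hx
    rw [mem_iInter] at hx ⊢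
    exact fun j => hAsymm _ _ (hx j)
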